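/- Suppose all edge weights are positive and the first n−1 edges form a rooted in-branching with root the vertex indexed n−1. Let Q be the n×n real matrix whose first n−1 rows are the rows of Eτᵀ and whose last row is the all-ones row vector 1ₙᵀ. Then Q is invertible, and Q * Lg * Q⁻¹ equals the n×n block matrix whose upper-left (n−1)×(n−1) block is Eτᵀ * A * W * Rᵀ, whose upper-right (n−1)×1 block is zero, whose lower-left 1×(n−1) block is 1ₙᵀ * A * W * Rᵀ, and whose lower-right 1×1 block is zero. (I.e., Lg is similar to this block lower-triangular matrix.) -/

import Mathlib

open Matrix

theorem aux_sum (n : ℕ) (hn : 2 ≤ n) (F : Fin n → ℝ) :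
    ∑ j, F j = (∑ i : Fin (n - 1), F ⟨i.val, by omega⟩) + F ⟨n - 1, by omega⟩ := by
  obtain ⟨k, rfl⟩ : ∃ k, n = k + 1 := ⟨n - 1, by omega⟩
  exact Fin.sum_univ_castSucc F

/-- For a weighted digraph with positive weights whose first `n-1` edges
form a rooted in-branching with root the vertex `n-1`, the graph Laplacian
`Lg = A * W * Eᵀ` is similar, via the matrix `Q` with rows `Eτᵀ` and `1ₙᵀ`, to the block
lower-triangular matrix with blocks `Eτᵀ * A * W * Rᵀ`, `0`, `1ₙᵀ * A * W * Rᵀ`, `0`. -/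
theorem graphLaplacian_similar_block_triangular
    (n m : ℕ) (hn : 2 ≤ n) (hm : 1 ≤ m) (hmn : n - 1 ≤ m)
    (tail head : Fin m → Fin n) (hth : ∀ e, tail e ≠ head e)
    (w : Fin m → ℝ) (hw : ∀ e, 0 < w e)
    (E : Matrix (Fin n) (Fin m) ℝ)
    (hE : ∀ v e, E v e = if v = tail e then 1 else if v = head e then -1 else 0)
    (A : Matrix (Fin n) (Fin m) ℝ)
    (hA : ∀ v e, A v e = if v = tail e then 1 else 0)
    (W : Matrix (Fin m) (Fin m) ℝ) (hW : W = Matrix.diagonal w)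
    (Lg : Matrix (Fin n) (Fin n) ℝ) (hLg : Lg = A * W * Eᵀ)
    (root : Fin n) (hroot : root = ⟨n - 1, by omega⟩)
    -- the first n-1 edges form a rooted in-branching with root `root`:
    (hinj : Function.Injective (fun i : Fin (n - 1) => tail ⟨i.val, lt_of_lt_of_le i.2 hmn⟩))
    (hnotroot : ∀ i : Fin (n - 1), tail ⟨i.val, lt_of_lt_of_le i.2 hmn⟩ ≠ root)
    (hsurj : ∀ v : Fin n, v ≠ root → ∃ i : Fin (n - 1), tail ⟨i.val, lt_of_lt_of_le i.2 hmn⟩ = v)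
    (hreach : ∀ v : Fin n, Relation.ReflTransGen
      (fun a b => ∃ e : Fin m, e.val < n - 1 ∧ tail e = a ∧ head e = b) v root)
    (Eτ : Matrix (Fin n) (Fin (n - 1)) ℝ)
    (hEτ : Eτ = E.submatrix id (fun i : Fin (n - 1) => ⟨i.val, lt_of_lt_of_le i.2 hmn⟩))
    (Ec : Matrix (Fin n) (Fin (m - (n - 1))) ℝ)
    (hEc : Ec = E.submatrix id
      (fun j : Fin (m - (n - 1)) => ⟨n - 1 + j.val, by have := j.2; omega⟩))
    (Tτ : Matrix (Fin (n - 1)) (Fin (m - (n - 1))) ℝ)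
    (hTτ : Tτ = (Eτᵀ * Eτ)⁻¹ * Eτᵀ * Ec)
    (R : Matrix (Fin (n - 1)) (Fin m) ℝ)
    (hR : ∀ (i : Fin (n - 1)) (j : Fin m), R i j =
      if h : j.val < n - 1 then (if i.val = j.val then 1 else 0)
      else Tτ i ⟨j.val - (n - 1), by have := j.2; omega⟩)
    (Q : Matrix (Fin n) (Fin n) ℝ)
    (hQ : ∀ (i j : Fin n), Q i j = if h : i.val < n - 1 then Eτᵀ ⟨i.val, h⟩ j else 1) :
    IsUnit Q ∧
    ∀ (i j : Fin n), (Q * Lg * Q⁻¹) i j =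
      if hi : i.val < n - 1 then
        (if hj : j.val < n - 1 then (Eτᵀ * A * W * Rᵀ) ⟨i.val, hi⟩ ⟨j.val, hj⟩ else 0)
      else
        (if hj : j.val < n - 1 then
          Matrix.vecMul (fun _ => (1 : ℝ)) (A * W * Rᵀ) ⟨j.val, hj⟩ else 0) := by
  have hEt : ∀ (x : Fin n → ℝ) (e : Fin m), ∑ v, E v e * x v = x (tail e) - x (head e) := by
    intro x e
    have h1 : ∀ v, E v e * x v = (if v = tail e then x v else 0) - (if v = head e then x v else 0) := by
      intro v
      rw [hE]
      have := hth e
      by_cases h : v = tail e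
      · have h2 : v ≠ head e := fun h' => this (h.symm.trans h')
        rw [if_pos h, if_pos h, if_neg h2]; ring
      · by_cases h2 : v = head e
        · rw [if_neg h, if_neg h, if_pos h2, if_pos h2]; ring
        · rw [if_neg h, if_neg h, if_neg h2, if_neg h2]; ring
    simp [h1, Finset.sum_sub_distrib]
  have hQ0 : ∀ x : Fin n → ℝ, Q *ᵥ x = 0 → x = 0 := by
    intro x hx
    have hstep : ∀ e : Fin m, e.val < n - 1 → x (tail e) = x (head e) := by
      intro e he
      have h := congrFun hx ⟨e.val, by omega⟩
      simp only [Matrix.mulVec, dotProduct, hQ, he, dite_true, hEτ, Matrix.transpose_apply,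
        Matrix.submatrix_apply, id, Pi.zero_apply] at h
      rw [hEt] at h
      linarith
    have hconst : ∀ v, x v = x root := by
      intro v
      induction hreach v using Relation.ReflTransGen.head_induction_on with
      | refl => rfl
      | head h _ ih =>
        obtain ⟨e, he, rfl, rfl⟩ := h
        rw [hstep e he, ih]
    have h := congrFun hx ⟨n - 1, by omega⟩
    simp only [Matrix.mulVec, dotProduct, hQ, lt_irrefl, dite_false, one_mul, Pi.zero_apply] at h
    simp only [hconst, Finset.sum_const, Finset.card_univ, Fintype.card_fin, nsmul_eq_mul] at h
    have hn0 : (n : ℝ) ≠ 0 := by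
      have : n ≠ 0 := by omega
      exact_mod_cast this
    have hr : x root = 0 := by
      rcases mul_eq_zero.mp h with h | h
      · exact absurd h hn0
      · exact h
    ext v
    rw [hconst, hr]; rfl
  have hQu : IsUnit Q := by
    rw [← Matrix.mulVec_injective_iff_isUnit]
    intro x y hxy
    have : Q *ᵥ (x - y) = 0 := by
      rw [Matrix.mulVec_sub]; exact sub_eq_zero.mpr hxy
    exact sub_eq_zero.mp (hQ0 _ this)
  refine ⟨hQu, ?_⟩
  have hEτ0 : ∀ x, Eτ *ᵥ x = 0 → x = 0 := by
    intro x hx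
    have hinjT : Function.Injective Qᵀ.mulVec := by
      rw [Matrix.mulVec_injective_iff_isUnit]
      exact (Matrix.isUnit_transpose Q).mpr hQu
    let y : Fin n → ℝ := fun j => if h : j.val < n - 1 then x ⟨j.val, h⟩ else 0
    have hy : Qᵀ *ᵥ y = Qᵀ *ᵥ 0 := by
      rw [Matrix.mulVec_zero, ← hx]
      ext v
      simp only [Matrix.mulVec, dotProduct]
      rw [aux_sum n hn]
      simp [y, hQ]
    have hy0 := hinjT hy
    ext i
    have := congrFun hy0 ⟨i.val, by omega⟩
    simpa [y] using this
  have hG : IsUnit (Eτᵀ * Eτ) := by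
    rw [← Matrix.mulVec_injective_iff_isUnit]
    intro x y hxy
    have h1 : (Eτᵀ * Eτ) *ᵥ (x - y) = 0 := by
      rw [Matrix.mulVec_sub]; exact sub_eq_zero.mpr hxy
    have h2 : Eτ *ᵥ (x - y) = 0 := by
      rw [← dotProduct_self_eq_zero, ← Matrix.vecMul_transpose, ← Matrix.dotProduct_mulVec,
        Matrix.vecMul_transpose, Matrix.mulVec_mulVec, h1, dotProduct_zero]
    exact sub_eq_zero.mp (hEτ0 _ h2)
  have hsumE : ∀ e, ∑ v, E v e = 0 := by
    intro e
    have := hEt (fun _ => 1) e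
    simpa using this
  have hT : Eτ * Tτ = Ec := by
    have hperp : Eτᵀ * (Ec - Eτ * Tτ) = 0 := by
      rw [hTτ, Matrix.mul_sub, sub_eq_zero, ← Matrix.mul_assoc, ← Matrix.mul_assoc,
        ← Matrix.mul_assoc, Matrix.mul_nonsing_inv _ ((Matrix.isUnit_iff_isUnit_det _).mp hG),
        Matrix.one_mul]
    have hone : ∀ j, ∑ v, (Ec - Eτ * Tτ) v j = 0 := by
      intro j
      simp only [Matrix.sub_apply, Finset.sum_sub_distrib, Matrix.mul_apply]
      rw [Finset.sum_comm]
      simp only [← Finset.sum_mul, hEc, hEτ, Matrix.submatrix_apply, id, hsumE]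
      simp
    symm
    rw [← sub_eq_zero]
    ext v j
    have : Q *ᵥ (fun v => (Ec - Eτ * Tτ) v j) = 0 := by
      ext i
      simp only [Matrix.mulVec, dotProduct, hQ]
      by_cases hi : i.val < n - 1
      · have := congrFun (congrFun hperp ⟨i.val, hi⟩) j
        rw [Matrix.mul_apply] at this
        simp only [hi, dite_true]
        exact this
      · simp only [hi, dite_false, one_mul]
        exact hone j
    exact congrFun (hQ0 _ this) v
  have hER : Eτ * R = E := by
    ext v e
    rw [Matrix.mul_apply]
    by_cases he : e.val < n - 1
    · rw [Finset.sum_eq_single ⟨e.val, he⟩]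
      · simp [hR, he, hEτ]
      · intro b _ hb
        have : b.val ≠ e.val := fun h => hb (Fin.ext h)
        simp [hR, he, this]
      · simp
    · simp only [hR, he, dite_false]
      have := congrFun (congrFun hT v) ⟨e.val - (n - 1), by omega⟩
      rw [Matrix.mul_apply] at this
      rw [this, hEc]
      simp only [Matrix.submatrix_apply, id]
      congr 1
      apply Fin.ext
      simp only
      omega
  let M : Matrix (Fin m) (Fin n) ℝ :=
    fun e j => if hj : j.val < n - 1 then Rᵀ e ⟨j.val, hj⟩ else 0
  have hMQ : M * Q = Eᵀ := by
    rw [← hER, Matrix.transpose_mul]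
    ext e v
    rw [Matrix.mul_apply, Matrix.mul_apply, aux_sum n hn]
    simp [M, hQ]
  have hmain : Q * Lg * Q⁻¹ = Q * (A * W * M) := by
    rw [hLg, ← hMQ]
    simp only [Matrix.mul_assoc]
    rw [Matrix.mul_nonsing_inv _ ((Matrix.isUnit_iff_isUnit_det _).mp hQu), Matrix.mul_one]
  have hMcol : ∀ v (j : Fin n), (A * W * M) v j =
      if hj : j.val < n - 1 then (A * W * Rᵀ) v ⟨j.val, hj⟩ else 0 := by
    intro v j
    by_cases hj : j.val < n - 1
    · rw [dif_pos hj, Matrix.mul_apply, Matrix.mul_apply]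
      simp only [M, hj, dite_true]
    · rw [Matrix.mul_apply]
      simp [M, hj]
  intro i j
  rw [hmain, Matrix.mul_apply]
  simp only [hMcol, hQ]
  by_cases hi : i.val < n - 1 <;> by_cases hj : j.val < n - 1 <;>
    simp only [hi, hj, dite_true, dite_false, mul_zero, Finset.sum_const_zero]
  · rw [Matrix.mul_assoc Eτᵀ, Matrix.mul_assoc Eτᵀ, Matrix.mul_apply]
  · rfl
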